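/- Let b : ℝ → ℝ be a continuous 2π-periodic function with ∫₀^{2π} b(s) ds = 0, and let B : 𝕋 → ℝ be the continuous function on the circle 𝕋 = ℝ/2πℤ induced by the 2π-periodic function t ↦ −∫₀ᵗ b(s) ds. For r ∈ ℝ set Ω̃_r = {t ∈ 𝕋 : B(t) < r}. Suppose Ω̃_r is not connected for some r ∈ ℝ. Then there exists r₀ < r such that Ω̃_{r₀} has two distinct connected components with disjoint closures; moreover, for every σ > 1 there exist smooth 2π-periodic functions f₀, v₀ : ℝ → ℝ satisfying Gevrey-σ estimates (i.e., there exist C, h > 0 with sup_t |f₀^{(k)}(t)| ≤ C h^k (k!)^σ and sup_t |v₀^{(k)}(t)| ≤ C h^k (k!)^σ for all k ∈ ℕ) such that ∫₀^{2π} f₀(s) ds = 0, the support of f₀ (viewed as a subset of 𝕋, i.e., the closure of {t ∈ 𝕋 : f₀(t) ≠ 0}) is disjoint from Ω̃_{r₀}, the support of v₀′ (viewed as a subset of 𝕋) is contained in Ω̃_{r₀}, and ∫₀^{2π} f₀(s) v₀(s) ds > 0. -/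

import Mathlib

open Real

/-!
Two points of different components of `{B < r}` cut the circle into two arcs, each of which leaves
`{B < r}`; this gives cyclically ordered points `q, x, p, y` with `B q, B p ≥ r` and `B x, B y < r₀`
for some `r₀ < r`, and `x`, `y` still lie in different components of `{B < r₀}`, whose closures stay
inside `{B < r}`. For a narrow periodic Gevrey bump `ρ` put `f₀ = ρ(· - p) - ρ(· - q)` and let `v₀`
be the primitive of `ρ(· - x) - ρ(· - y)` vanishing at `q`. Then `v₀` equals `0` near `q` and `∫ ρ`
near `p`, so that `∫ f₀ v₀ = (∫ ρ) ^ 2 > 0`.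

The bump is `exp (-(cos t - cos δ)⁻ⁿ)` with `n` odd, cut off where `cos t ≤ cos δ`. It extends
holomorphically to discs around `t` of radius proportional to `x = cos t - cos δ`, where it is
bounded by `exp (-x⁻ⁿ / 2)`; Cauchy's estimates and `x⁻ᵏ exp (-x⁻ⁿ / 2) ≤ 2ᵏ (k!) ^ (1 / n)` give
Gevrey order `1 + 1 / n`.
-/

/-- Uniform Gevrey estimates of order `σ` on the whole real line. Smoothness of `f` is not part of
the definition, and `iteratedDeriv` has junk values where `f` is not smooth. -/
def HasGevreyBounds (σ : ℝ) (f : ℝ → ℝ) : Prop :=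
  ∃ C > (0 : ℝ), ∃ h > (0 : ℝ), ∀ k : ℕ, ∀ t : ℝ,
    |iteratedDeriv k f t| ≤ C * h ^ k * (Nat.factorial k : ℝ) ^ σ

namespace HasGevreyBounds

open scoped ContDiff

variable {σ : ℝ} {f g : ℝ → ℝ}

lemma comp_sub_const (hf : HasGevreyBounds σ f) (a : ℝ) :
    HasGevreyBounds σ fun t => f (t - a) := by
  obtain ⟨C, hC, h, hh, H⟩ := hf
  refine ⟨C, hC, h, hh, fun k t => ?_⟩
  rw [iteratedDeriv_comp_sub_const]
  exact H k (t - a)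

lemma sub (hf : HasGevreyBounds σ f) (hg : HasGevreyBounds σ g) (hfs : ContDiff ℝ ∞ f)
    (hgs : ContDiff ℝ ∞ g) : HasGevreyBounds σ fun t => f t - g t := by
  obtain ⟨C, hC, h, hh, H⟩ := hf
  obtain ⟨C', hC', h', hh', H'⟩ := hg
  refine ⟨C + C', by positivity, max h h', by positivity, fun k t => ?_⟩
  rw [iteratedDeriv_fun_sub (hfs.of_le (by exact_mod_cast le_top)).contDiffAt
    (hgs.of_le (by exact_mod_cast le_top)).contDiffAt]
  calc |iteratedDeriv k f t - iteratedDeriv k g t|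
      ≤ |iteratedDeriv k f t| + |iteratedDeriv k g t| := abs_sub _ _
    _ ≤ C * h ^ k * (k.factorial : ℝ) ^ σ + C' * h' ^ k * (k.factorial : ℝ) ^ σ :=
        add_le_add (H k t) (H' k t)
    _ ≤ C * max h h' ^ k * (k.factorial : ℝ) ^ σ +
          C' * max h h' ^ k * (k.factorial : ℝ) ^ σ := by
        gcongr
        · exact le_max_left _ _
        · exact le_max_right _ _
    _ = (C + C') * max h h' ^ k * (k.factorial : ℝ) ^ σ := by ring

lemma of_deriv (hσ : 0 ≤ σ) (hf : HasGevreyBounds σ (deriv f)) {A : ℝ} (hA : ∀ t, |f t| ≤ A) :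
    HasGevreyBounds σ f := by
  obtain ⟨C, hC, h, hh, H⟩ := hf
  have hA0 : 0 ≤ A := (abs_nonneg _).trans (hA 0)
  refine ⟨C + A, by positivity, max h 1, by positivity, fun k t => ?_⟩
  rcases k with _ | k
  · simpa using (hA t).trans (by linarith)
  · rw [iteratedDeriv_succ']
    have h_pow : h ^ k ≤ max h 1 ^ (k + 1) :=
      (pow_le_pow_left₀ hh.le (le_max_left _ _) k).trans
        (pow_le_pow_right₀ (le_max_right _ _) k.le_succ)
    calc |iteratedDeriv k (deriv f) t| ≤ C * h ^ k * (k.factorial : ℝ) ^ σ := H k t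
      _ ≤ (C + A) * max h 1 ^ (k + 1) * ((k + 1).factorial : ℝ) ^ σ := by
        gcongr
        · linarith
        · exact k.le_succ

end HasGevreyBounds

section Primitive

open scoped ContDiff

variable {g : ℝ → ℝ} {T : ℝ}

lemma contDiff_integral_right (hg : ContDiff ℝ ∞ g) (a : ℝ) :
    ContDiff ℝ ∞ fun t => ∫ s in a..t, g s := by
  have hderiv : deriv (fun t => ∫ s in a..t, g s) = g := funext (hg.continuous.deriv_integral g a)
  exact contDiff_infty_iff_deriv.2
    ⟨fun t => (hg.continuous.integral_hasStrictDerivAt a t).hasDerivAt.differentiableAt,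
      hderiv.symm ▸ hg⟩

lemma periodic_integral_right (hg : Continuous g) (hper : Function.Periodic g T)
    (h0 : ∫ s in (0 : ℝ)..T, g s = 0) (a : ℝ) :
    Function.Periodic (fun t => ∫ s in a..t, g s) T := fun t => by
  have hT : ∫ s in a..a + T, g s = 0 := by
    rw [hper.intervalIntegral_add_eq a 0, zero_add, h0]
  simp only [hper.intervalIntegral_add_eq_add a t fun _ _ => hg.intervalIntegrable _ _, hT,
    add_zero]

lemma HasGevreyBounds.integral_right {σ : ℝ} (hσ : 0 ≤ σ) (hgev : HasGevreyBounds σ g)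
    (hg : Continuous g) (hT : T ≠ 0) (hper : Function.Periodic g T)
    (h0 : ∫ s in (0 : ℝ)..T, g s = 0) (a : ℝ) :
    HasGevreyBounds σ fun t => ∫ s in a..t, g s := by
  have hderiv : deriv (fun t => ∫ s in a..t, g s) = g := funext (hg.deriv_integral g a)
  have hcont : Continuous fun t => ∫ s in a..t, g s :=
    intervalIntegral.continuous_primitive (fun _ _ => hg.intervalIntegrable _ _) a
  obtain ⟨A, hA⟩ := isBounded_iff_forall_norm_le.1
    ((periodic_integral_right hg hper h0 a).isBounded_of_continuous hT hcont)
  exact .of_deriv hσ (hderiv.symm ▸ hgev) fun t => hA _ (Set.mem_range_self t)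

end Primitive

section ComplexExtension

open scoped ContDiff

lemma iteratedDeriv_eq_ofReal_iteratedDeriv {f : ℝ → ℝ} {F : ℂ → ℂ} {U : Set ℝ} (hU : IsOpen U)
    (hf : ContDiff ℝ ∞ f) (hF : ∀ t ∈ U, AnalyticAt ℂ F (t : ℂ)) (h : ∀ t ∈ U, F t = f t)
    (k : ℕ) : ∀ t ∈ U, iteratedDeriv k F (t : ℂ) = ((iteratedDeriv k f t : ℝ) : ℂ) := by
  induction k with
  | zero => simpa using h
  | succ k ih =>
    intro t ht
    have hFd : HasDerivAt (iteratedDeriv k F) (iteratedDeriv (k + 1) F t) t := by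
      rw [iteratedDeriv_succ, hasDerivAt_deriv_iff, iteratedDeriv_eq_iterate]
      exact ((hF t ht).iterated_deriv k).differentiableAt
    have hfd : HasDerivAt (iteratedDeriv k f) (iteratedDeriv (k + 1) f t) t := by
      rw [iteratedDeriv_succ, hasDerivAt_deriv_iff]
      exact hf.differentiable_iteratedDeriv k (by exact_mod_cast ENat.natCast_lt_top k) t
    refine hFd.comp_ofReal.unique (hfd.ofReal_comp.congr_of_eventuallyEq ?_)
    filter_upwards [hU.mem_nhds ht] with s hs using ih s hs

lemma norm_cos_sub_cos_ofReal_le {z : ℂ} {t : ℝ} (h : ‖z - t‖ ≤ 1) :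
    ‖Complex.cos z - Complex.cos t‖ ≤ 2 * ‖z - t‖ := by
  have hsplit : Complex.cos z - Complex.cos t =
      (Complex.exp (t * Complex.I) * (Complex.exp ((z - t) * Complex.I) - 1) +
        Complex.exp (-t * Complex.I) * (Complex.exp (-(z - t) * Complex.I) - 1)) / 2 := by
    simp only [Complex.cos, mul_sub, ← Complex.exp_add, mul_one]
    ring_nf
  have h1 : ‖Complex.exp ((z - t) * Complex.I) - 1‖ ≤ 2 * ‖z - t‖ := by
    simpa using Complex.norm_exp_sub_one_le (x := (z - t) * Complex.I) (by simpa using h)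
  have h2 : ‖Complex.exp (-(z - t) * Complex.I) - 1‖ ≤ 2 * ‖z - t‖ := by
    simpa only [norm_mul, norm_neg, Complex.norm_I, mul_one] using
      Complex.norm_exp_sub_one_le (x := -(z - t) * Complex.I) (by rw [norm_mul, norm_neg]; simpa)
  have h3 : ‖Complex.exp (-t * Complex.I)‖ = 1 := by
    simpa using Complex.norm_exp_ofReal_mul_I (-t)
  rw [hsplit, norm_div, Complex.norm_ofNat, div_le_iff₀ two_pos]
  refine (norm_add_le _ _).trans ?_
  rw [norm_mul, norm_mul, Complex.norm_exp_ofReal_mul_I, h3]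
  linarith

lemma exists_half_le_re_inv_one_add_pow (n : ℕ) :
    ∃ ε > (0 : ℝ), ∀ u : ℂ, ‖u‖ ≤ ε → 1 + u ≠ 0 ∧ 1 / 2 ≤ (((1 + u) ^ n)⁻¹).re := by
  have hcont : ContinuousAt (fun u : ℂ => (((1 + u) ^ n)⁻¹).re) 0 :=
    Complex.continuous_re.continuousAt.comp (ContinuousAt.inv₀ (by fun_prop) (by simp))
  have hre : ∀ᶠ u : ℂ in nhds 0, 1 / 2 < (((1 + u) ^ n)⁻¹).re :=
    hcont.eventually_const_lt (by norm_num)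
  have hne : ∀ᶠ u : ℂ in nhds 0, 1 + u ≠ 0 :=
    ContinuousAt.eventually_ne (by fun_prop) (by simp)
  obtain ⟨ε, hε, H⟩ := Metric.nhds_basis_closedBall.eventually_iff.1 (hne.and hre)
  exact ⟨ε, hε, fun u hu => (H (by simpa using hu)).imp_right le_of_lt⟩

lemma exists_norm_cexp_neg_inv_pow_le (n : ℕ) :
    ∃ ε > (0 : ℝ), ∀ x > (0 : ℝ), ∀ w : ℂ, ‖w - x‖ ≤ ε * x →
      w ≠ 0 ∧ ‖Complex.exp (-(w ^ n)⁻¹)‖ ≤ exp (-((x ^ n)⁻¹ / 2)) := by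
  obtain ⟨ε, hε, H⟩ := exists_half_le_re_inv_one_add_pow n
  refine ⟨ε, hε, fun x hx w hw => ?_⟩
  have hx0 : (x : ℂ) ≠ 0 := by exact_mod_cast hx.ne'
  obtain ⟨u, rfl⟩ : ∃ u : ℂ, w = x * (1 + u) :=
    ⟨(w - x) / x, by rw [mul_add, mul_div_cancel₀ _ hx0, mul_one, add_sub_cancel]⟩
  have hu : ‖u‖ ≤ ε := by
    rw [mul_add, mul_one, add_sub_cancel_left, norm_mul, Complex.norm_real,
      norm_of_nonneg hx.le, mul_comm] at hw
    exact le_of_mul_le_mul_right hw hx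
  obtain ⟨hne, hre⟩ := H u hu
  refine ⟨mul_ne_zero hx0 hne, ?_⟩
  rw [Complex.norm_exp, exp_le_exp, Complex.neg_re, neg_le_neg_iff, mul_pow, mul_inv,
    ← Complex.ofReal_pow, ← Complex.ofReal_inv, Complex.re_ofReal_mul, div_eq_mul_one_div]
  gcongr

lemma inv_pow_mul_exp_le {n : ℕ} (hn : n ≠ 0) (k : ℕ) {x : ℝ} (hx : 0 < x) :
    (x ^ k)⁻¹ * exp (-((x ^ n)⁻¹ / 2)) ≤ 2 ^ k * (k.factorial : ℝ) ^ (1 / (n : ℝ)) := by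
  refine le_of_pow_le_pow_left₀ hn (by positivity) ?_
  set y := (x ^ n)⁻¹ / 2 with hy
  have hy0 : 0 < y := by positivity
  have hfact : ((k.factorial : ℝ) ^ (1 / (n : ℝ))) ^ n = k.factorial := by
    rw [one_div, rpow_inv_natCast_pow (by positivity) hn]
  have hxy : ((x ^ k)⁻¹) ^ n = (2 * y) ^ k := by
    rw [hy, mul_div_cancel₀ _ two_ne_zero, inv_pow, inv_pow, ← pow_mul, ← pow_mul, mul_comm]
  have hexp : exp (-y) ^ n ≤ exp (-y) :=
    pow_le_of_le_one (exp_nonneg _) (exp_le_one_iff.2 (by linarith)) hn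
  have hpow : y ^ k ≤ exp y * k.factorial :=
    (div_le_iff₀ (by positivity)).1 (pow_div_factorial_le_exp y hy0.le k)
  rw [mul_pow, mul_pow, hfact, hxy]
  calc (2 * y) ^ k * exp (-y) ^ n
      ≤ (2 * y) ^ k * exp (-y) := by gcongr
    _ = 2 ^ k * (y ^ k * exp (-y)) := by rw [mul_pow, mul_assoc]
    _ ≤ 2 ^ k * (exp y * k.factorial * exp (-y)) := by gcongr
    _ = 2 ^ k * k.factorial := by rw [mul_right_comm, ← exp_add, add_neg_cancel, exp_zero, one_mul]
    _ ≤ (2 ^ k) ^ n * k.factorial := by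
      gcongr
      exact le_self_pow₀ (one_le_pow₀ one_le_two) hn

variable {φ : ℝ → ℝ} {Φ : ℂ → ℂ}

lemma contDiff_expNegInvGlue_pow (hΦ : Differentiable ℂ Φ) (hΦφ : ∀ t : ℝ, Φ t = φ t) (n : ℕ) :
    ContDiff ℝ ∞ fun t => expNegInvGlue (φ t ^ n) := by
  have hφ : ContDiff ℝ ∞ φ := by
    simpa only [hΦφ, Complex.ofReal_re] using (hΦ.contDiff (n := ∞)).real_of_complex
  exact expNegInvGlue.contDiff.comp (hφ.pow n)

lemma differentiableAt_cexp_neg_inv_pow (hΦ : Differentiable ℂ Φ) (n : ℕ) {z : ℂ} (hz : Φ z ≠ 0) :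
    DifferentiableAt ℂ (fun z => Complex.exp (-(Φ z ^ n)⁻¹)) z :=
  (((hΦ z).pow n).inv (pow_ne_zero n hz)).neg.cexp

lemma iteratedDeriv_cexp_neg_inv_pow (hΦ : Differentiable ℂ Φ) (hΦφ : ∀ t : ℝ, Φ t = φ t)
    (n k : ℕ) {t : ℝ} (ht : 0 < φ t) :
    iteratedDeriv k (fun z => Complex.exp (-(Φ z ^ n)⁻¹)) (t : ℂ) =
      ((iteratedDeriv k (fun s => expNegInvGlue (φ s ^ n)) t : ℝ) : ℂ) := by
  have hφ : Continuous φ := by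
    simpa only [Function.comp_def, hΦφ, Complex.ofReal_re] using
      Complex.continuous_re.comp (hΦ.continuous.comp Complex.continuous_ofReal)
  refine iteratedDeriv_eq_ofReal_iteratedDeriv (isOpen_lt continuous_const hφ)
    (contDiff_expNegInvGlue_pow hΦ hΦφ n) (fun s (hs : 0 < φ s) => ?_)
    (fun s (hs : 0 < φ s) => ?_) k t ht
  · have hΦs : Φ s ≠ 0 := hΦφ s ▸ Complex.ofReal_ne_zero.2 hs.ne'
    exact DifferentiableOn.analyticAt (s := {z | Φ z ≠ 0})
      (fun z hz => (differentiableAt_cexp_neg_inv_pow hΦ n hz).differentiableWithinAt)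
      ((isOpen_ne_fun hΦ.continuous continuous_const).mem_nhds hΦs)
  · simp [hΦφ, expNegInvGlue, (pow_pos hs n).not_ge]

lemma exists_abs_iteratedDeriv_expNegInvGlue_pow_le (hΦ : Differentiable ℂ Φ)
    (hΦφ : ∀ t : ℝ, Φ t = φ t) {d L M : ℝ} (hd : 0 < d) (hL : 0 < L) (hM : 0 < M)
    (hLip : ∀ (t : ℝ) (z : ℂ), ‖z - t‖ ≤ d → ‖Φ z - Φ t‖ ≤ L * ‖z - t‖) (hφM : ∀ t, φ t ≤ M)
    (n : ℕ) : ∃ c > (0 : ℝ), ∀ (k : ℕ) (t : ℝ), 0 < φ t →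
      |iteratedDeriv k (fun s => expNegInvGlue (φ s ^ n)) t| ≤
        k.factorial * exp (-((φ t ^ n)⁻¹ / 2)) / (c * φ t) ^ k := by
  obtain ⟨ε, hε, H⟩ := exists_norm_cexp_neg_inv_pow_le n
  refine ⟨min (d / M) (ε / L), by positivity, fun k t ht => ?_⟩
  set R := min (d / M) (ε / L) * φ t with hR
  have hR0 : 0 < R := by positivity
  have hRd : R ≤ d := calc
    R ≤ d / M * M := by rw [hR]; gcongr; exacts [min_le_left _ _, hφM t]
    _ = d := div_mul_cancel₀ d hM.ne'
  have hRε : L * R ≤ ε * φ t := calc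
    L * R ≤ L * (ε / L * φ t) := by rw [hR]; gcongr; exact min_le_right _ _
    _ = ε * φ t := by field_simp
  have hball : ∀ z ∈ Metric.closedBall (t : ℂ) R,
      Φ z ≠ 0 ∧ ‖Complex.exp (-(Φ z ^ n)⁻¹)‖ ≤ exp (-((φ t ^ n)⁻¹ / 2)) := by
    intro z hz
    rw [mem_closedBall_iff_norm] at hz
    refine H (φ t) ht (Φ z) ?_
    calc ‖Φ z - φ t‖ ≤ L * ‖z - t‖ := hΦφ t ▸ hLip t z (hz.trans hRd)
      _ ≤ L * R := by gcongr
      _ ≤ ε * φ t := hRε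
  have hcauchy := Complex.norm_iteratedDeriv_le_of_forall_mem_sphere_norm_le k hR0
    (DifferentiableOn.diffContOnCl <| closure_ball (t : ℂ) hR0.ne' ▸ fun z hz =>
      (differentiableAt_cexp_neg_inv_pow hΦ n (hball z hz).1).differentiableWithinAt)
    fun z hz => (hball z (Metric.sphere_subset_closedBall hz)).2
  rwa [iteratedDeriv_cexp_neg_inv_pow hΦ hΦφ n k ht, Complex.norm_real, norm_eq_abs] at hcauchy

lemma iteratedDeriv_expNegInvGlue_pow_eq_zero {n : ℕ} (hn : Odd n) (k : ℕ) {t : ℝ}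
    (ht : t ∉ closure {s | 0 < φ s}) :
    iteratedDeriv k (fun s => expNegInvGlue (φ s ^ n)) t = 0 := by
  have hzero : (fun s => expNegInvGlue (φ s ^ n)) =ᶠ[nhds t] fun _ => 0 := by
    filter_upwards [isClosed_closure.isOpen_compl.mem_nhds ht] with s hs
    exact expNegInvGlue.zero_of_nonpos
      (hn.pow_nonpos (not_lt.1 fun hpos => hs (subset_closure hpos)))
  rw [hzero.iteratedDeriv_eq k, iteratedDeriv_fun_const_zero]

lemma hasGevreyBounds_expNegInvGlue_pow (hΦ : Differentiable ℂ Φ) (hΦφ : ∀ t : ℝ, Φ t = φ t)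
    {d L M : ℝ} (hd : 0 < d) (hL : 0 < L) (hM : 0 < M)
    (hLip : ∀ (t : ℝ) (z : ℂ), ‖z - t‖ ≤ d → ‖Φ z - Φ t‖ ≤ L * ‖z - t‖) (hφM : ∀ t, φ t ≤ M)
    {n : ℕ} (hn : Odd n) {σ : ℝ} (hσ : 1 + 1 / (n : ℝ) ≤ σ) :
    HasGevreyBounds σ fun t => expNegInvGlue (φ t ^ n) := by
  obtain ⟨c, hc, H⟩ := exists_abs_iteratedDeriv_expNegInvGlue_pow_le hΦ hΦφ hd hL hM hLip hφM n
  refine ⟨1, one_pos, 2 / c, by positivity, fun k t => ?_⟩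
  have hfact : (1 : ℝ) ≤ k.factorial := by exact_mod_cast k.factorial_pos
  have hpos : ∀ s, 0 < φ s → |iteratedDeriv k (fun s => expNegInvGlue (φ s ^ n)) s| ≤
      1 * (2 / c) ^ k * (k.factorial : ℝ) ^ σ := by
    intro s hs
    calc |iteratedDeriv k (fun s => expNegInvGlue (φ s ^ n)) s|
        ≤ k.factorial * exp (-((φ s ^ n)⁻¹ / 2)) / (c * φ s) ^ k := H k s hs
      _ = k.factorial / c ^ k * ((φ s ^ k)⁻¹ * exp (-((φ s ^ n)⁻¹ / 2))) := by
          rw [mul_pow]; field_simp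
      _ ≤ k.factorial / c ^ k * (2 ^ k * (k.factorial : ℝ) ^ (1 / (n : ℝ))) := by
          exact mul_le_mul_of_nonneg_left (inv_pow_mul_exp_le hn.pos.ne' k hs) (by positivity)
      _ = 1 * (2 / c) ^ k * (k.factorial : ℝ) ^ (1 + 1 / (n : ℝ)) := by
          rw [rpow_add (by positivity), rpow_one, div_pow]; ring
      _ ≤ 1 * (2 / c) ^ k * (k.factorial : ℝ) ^ σ := by gcongr
  by_cases ht : t ∈ closure {s | 0 < φ s}
  · have hcont := (contDiff_expNegInvGlue_pow hΦ hΦφ n).continuous_iteratedDeriv k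
      (by exact_mod_cast le_top)
    exact closure_minimal hpos (isClosed_le hcont.abs continuous_const) ht
  · rw [iteratedDeriv_expNegInvGlue_pow_eq_zero hn k ht, abs_zero]
    positivity

end ComplexExtension

section PeriodicBump

open scoped ContDiff

/-- A smooth nonnegative `T`-periodic function, positive at the points of `Tℤ` and vanishing at
distance at least `δ` from them; by periodicity it suffices to ask this on one period. -/
structure IsPeriodicBump (T δ : ℝ) (ρ : ℝ → ℝ) : Prop where
  contDiff : ContDiff ℝ ∞ ρ
  periodic : Function.Periodic ρ T
  nonneg : ∀ t, 0 ≤ ρ t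
  pos_zero : 0 < ρ 0
  eq_zero : ∀ t ∈ Set.Icc δ (T - δ), ρ t = 0

/-- The function `exp (-(cos (2πt/T) - cos (2πδ/T))⁻ⁿ)`, extended by zero to the set where the
`n`-th power is not positive; a Gevrey `T`-periodic bump of half-width `δ` when `n` is odd. -/
noncomputable def cosBump (T : ℝ) (n : ℕ) (δ t : ℝ) : ℝ :=
  expNegInvGlue ((cos (2 * π / T * t) - cos (2 * π / T * δ)) ^ n)

variable {T δ : ℝ} {n : ℕ}

lemma isPeriodicBump_cosBump (hT : 0 < T) (hδ : 0 < δ) (hδT : 2 * δ ≤ T) (hn : Odd n) :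
    IsPeriodicBump T δ (cosBump T n δ) where
  contDiff := by
    have hdiff : ContDiff ℝ ∞ fun t => (cos (2 * π / T * t) - cos (2 * π / T * δ)) ^ n := by
      fun_prop
    exact expNegInvGlue.contDiff.comp hdiff
  periodic t := by
    rw [cosBump, mul_add, div_mul_cancel₀ _ hT.ne', cos_add_two_pi, cosBump]
  nonneg _ := expNegInvGlue.nonneg _
  pos_zero := by
    have hle : 2 * π / T * δ ≤ π := by
      rw [div_mul_eq_mul_div, div_le_iff₀ hT]
      nlinarith [pi_pos]
    refine expNegInvGlue.pos_of_pos (pow_pos (sub_pos.2 ?_) n)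
    rw [mul_zero]
    exact cos_lt_cos_of_nonneg_of_le_pi le_rfl hle (by positivity)
  eq_zero t ht := by
    have hlow : 2 * π / T * δ ≤ 2 * π / T * t := by gcongr; exact ht.1
    have hhigh : 2 * π / T * t ≤ 2 * π - 2 * π / T * δ := by
      calc 2 * π / T * t ≤ 2 * π / T * (T - δ) := by gcongr; exact ht.2
        _ = 2 * π - 2 * π / T * δ := by field_simp
    have hδ0 : 0 ≤ 2 * π / T * δ := by positivity
    refine expNegInvGlue.zero_of_nonpos (hn.pow_nonpos (sub_nonpos.2 ?_))
    rcases le_total (2 * π / T * t) π with hπ | hπ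
    · exact cos_le_cos_of_nonneg_of_le_pi hδ0 hπ hlow
    · rw [← cos_two_pi_sub (2 * π / T * t)]
      exact cos_le_cos_of_nonneg_of_le_pi hδ0 (by linarith) (by linarith)

lemma hasGevreyBounds_cosBump (hT : 0 < T) (hn : Odd n) {σ : ℝ} (hσ : 1 + 1 / (n : ℝ) ≤ σ) :
    HasGevreyBounds σ (cosBump T n δ) := by
  set κ := 2 * π / T
  have hκ0 : 0 < κ := by positivity
  refine hasGevreyBounds_expNegInvGlue_pow (φ := fun t => cos (κ * t) - cos (κ * δ))
    (Φ := fun z => Complex.cos (κ * z) - Complex.cos (κ * δ)) (d := 1 / κ) (L := 2 * κ) (M := 2)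
    (by fun_prop) (fun t => by push_cast; rfl) (by positivity) (by positivity) two_pos
    (fun t z hz => ?_) (fun t => ?_) hn hσ
  · have hnorm : ‖(κ * z : ℂ) - (κ * t : ℝ)‖ = κ * ‖z - t‖ := by
      rw [Complex.ofReal_mul, ← mul_sub, norm_mul, Complex.norm_real, norm_of_nonneg hκ0.le]
    have hcos := norm_cos_sub_cos_ofReal_le (z := κ * z) (t := κ * t)
      (by rwa [hnorm, mul_comm, ← le_div_iff₀ hκ0])
    rw [hnorm, Complex.ofReal_mul] at hcos
    rwa [sub_sub_sub_cancel_right, mul_assoc]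
  · linarith [cos_le_one (κ * t), neg_one_le_cos (κ * δ)]

lemma exists_odd_one_add_inv_le {σ : ℝ} (hσ : 1 < σ) : ∃ n : ℕ, Odd n ∧ 1 + 1 / (n : ℝ) ≤ σ := by
  obtain ⟨m, hm⟩ := exists_nat_one_div_lt (sub_pos.2 hσ)
  refine ⟨2 * m + 1, odd_two_mul_add_one m, ?_⟩
  have hle : 1 / ((2 * m + 1 : ℕ) : ℝ) ≤ 1 / ((m : ℝ) + 1) := by
    gcongr
    push_cast
    linarith [(Nat.cast_nonneg m : (0 : ℝ) ≤ m)]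
  linarith

lemma exists_isPeriodicBump_hasGevreyBounds (hT : 0 < T) (hδ : 0 < δ) (hδT : 2 * δ ≤ T) {σ : ℝ}
    (hσ : 1 < σ) : ∃ ρ, IsPeriodicBump T δ ρ ∧ HasGevreyBounds σ ρ := by
  obtain ⟨n, hn, hnσ⟩ := exists_odd_one_add_inv_le hσ
  exact ⟨cosBump T n δ, isPeriodicBump_cosBump hT hδ hδT hn, hasGevreyBounds_cosBump hT hn hnσ⟩

end PeriodicBump

namespace IsPeriodicBump

variable {T δ : ℝ} {ρ : ℝ → ℝ}

lemma comp_sub_eq_zero_of_right (hρ : IsPeriodicBump T δ ρ) {c s : ℝ} (h1 : c + δ ≤ s)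
    (h2 : s ≤ c + T - δ) : ρ (s - c) = 0 :=
  hρ.eq_zero _ ⟨by linarith, by linarith⟩

lemma comp_sub_eq_zero_of_left (hρ : IsPeriodicBump T δ ρ) {c s : ℝ} (h1 : c - T + δ ≤ s)
    (h2 : s ≤ c - δ) : ρ (s - c) = 0 := by
  rw [← hρ.periodic]
  exact hρ.eq_zero _ ⟨by linarith, by linarith⟩

lemma exists_abs_add_zsmul_le (hρ : IsPeriodicBump T δ ρ) (hT : 0 < T) {t : ℝ} (ht : ρ t ≠ 0) :
    ∃ m : ℤ, |t + m • T| ≤ δ := by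
  obtain ⟨m, hm, -⟩ := existsUnique_add_zsmul_mem_Ico hT t (-δ)
  refine ⟨m, abs_le.2 ⟨hm.1, ?_⟩⟩
  by_contra! hlt
  exact ht (hρ.periodic.zsmul m t ▸ hρ.eq_zero _ ⟨hlt.le, by linarith [hm.2]⟩)

lemma continuous_comp_sub (hρ : IsPeriodicBump T δ ρ) (c : ℝ) : Continuous fun s => ρ (s - c) :=
  hρ.contDiff.continuous.comp (continuous_sub_right c)

lemma integral_pos (hρ : IsPeriodicBump T δ ρ) (hT : 0 < T) : 0 < ∫ s in (0 : ℝ)..T, ρ s :=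
  intervalIntegral.integral_pos hT hρ.contDiff.continuous.continuousOn (fun s _ => hρ.nonneg s)
    ⟨0, Set.left_mem_Icc.2 hT.le, hρ.pos_zero⟩

lemma integral_comp_sub_add_period (hρ : IsPeriodicBump T δ ρ) (c a : ℝ) :
    ∫ s in a..a + T, ρ (s - c) = ∫ s in (0 : ℝ)..T, ρ s := by
  rw [intervalIntegral.integral_comp_sub_right, add_sub_right_comm,
    hρ.periodic.intervalIntegral_add_eq (a - c) 0, zero_add]

lemma integral_comp_sub_eq (hρ : IsPeriodicBump T δ ρ) {a b c : ℝ} (hac : a ≤ c - δ)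
    (hcb : c + δ ≤ b) (hba : b ≤ a + T) :
    ∫ s in a..b, ρ (s - c) = ∫ s in (0 : ℝ)..T, ρ s := by
  have hrest : ∫ s in b..a + T, ρ (s - c) = 0 := by
    rw [← intervalIntegral.integral_zero (a := b) (b := a + T)]
    refine intervalIntegral.integral_congr fun s hs => ?_
    rw [Set.uIcc_of_le hba] at hs
    exact hρ.comp_sub_eq_zero_of_right (hcb.trans hs.1) (by linarith [hs.2])
  have hint := fun u v => (hρ.continuous_comp_sub c).intervalIntegrable
    (μ := MeasureTheory.volume) u v
  rw [← hρ.integral_comp_sub_add_period c a,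
    ← intervalIntegral.integral_add_adjacent_intervals (hint a b) (hint b (a + T)), hrest, add_zero]

end IsPeriodicBump

/-- The difference of the translates of `ρ` centred at `a` and at `c`; it has mean zero when `ρ` is
periodic, and both `f₀` and `v₀'` are of this form. -/
def translateDiff (ρ : ℝ → ℝ) (a c t : ℝ) : ℝ := ρ (t - a) - ρ (t - c)

section TranslateDiff

open scoped ContDiff

variable {ρ : ℝ → ℝ} {T : ℝ}

lemma contDiff_translateDiff (hρ : ContDiff ℝ ∞ ρ) (a c : ℝ) :
    ContDiff ℝ ∞ (translateDiff ρ a c) :=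
  (hρ.comp (contDiff_id.sub contDiff_const)).sub (hρ.comp (contDiff_id.sub contDiff_const))

lemma periodic_translateDiff (hρ : Function.Periodic ρ T) (a c : ℝ) :
    Function.Periodic (translateDiff ρ a c) T :=
  (hρ.sub_const a).sub (hρ.sub_const c)

lemma HasGevreyBounds.translateDiff {σ : ℝ} (hgev : HasGevreyBounds σ ρ) (hρ : ContDiff ℝ ∞ ρ)
    (a c : ℝ) : HasGevreyBounds σ (translateDiff ρ a c) :=
  (hgev.comp_sub_const a).sub (hgev.comp_sub_const c)
    (hρ.comp (contDiff_id.sub contDiff_const)) (hρ.comp (contDiff_id.sub contDiff_const))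

end TranslateDiff

namespace IsPeriodicBump

variable {T δ : ℝ} {ρ : ℝ → ℝ}

lemma continuous_translateDiff (hρ : IsPeriodicBump T δ ρ) (a c : ℝ) :
    Continuous (translateDiff ρ a c) :=
  (contDiff_translateDiff hρ.contDiff a c).continuous

lemma integral_translateDiff (hρ : IsPeriodicBump T δ ρ) (a c : ℝ) :
    ∫ s in (0 : ℝ)..T, translateDiff ρ a c s = 0 := by
  have hint := fun d => (hρ.continuous_comp_sub d).intervalIntegrable
    (μ := MeasureTheory.volume) 0 T
  have htranslate := fun d => zero_add T ▸ hρ.integral_comp_sub_add_period d 0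
  simp only [translateDiff]
  rw [intervalIntegral.integral_sub (hint a) (hint c), htranslate, htranslate, sub_self]

lemma closure_coe_image_support_translateDiff_subset (hρ : IsPeriodicBump T δ ρ) (hT : 0 < T)
    (a c : ℝ) :
    closure (((↑) : ℝ → AddCircle T) '' Function.support (translateDiff ρ a c)) ⊆
      ((↑) : ℝ → AddCircle T) '' (Metric.closedBall a δ ∪ Metric.closedBall c δ) := by
  have : Fact (0 < T) := ⟨hT⟩
  have hclosed : IsClosed (((↑) : ℝ → AddCircle T) ''
      (Metric.closedBall a δ ∪ Metric.closedBall c δ)) :=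
    (((isCompact_closedBall a δ).union (isCompact_closedBall c δ)).image
      (AddCircle.continuous_mk' T)).isClosed
  have hmem : ∀ t d : ℝ, ρ (t - d) ≠ 0 →
      (t : AddCircle T) ∈ ((↑) : ℝ → AddCircle T) '' Metric.closedBall d δ := by
    intro t d h
    obtain ⟨m, hm⟩ := hρ.exists_abs_add_zsmul_le hT h
    refine ⟨t + m • T, ?_, ?_⟩
    · rwa [mem_closedBall_iff_norm, norm_eq_abs, add_sub_right_comm]
    · rw [AddCircle.coe_add, AddCircle.coe_zsmul, AddCircle.coe_period, smul_zero, add_zero]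
  refine closure_minimal ?_ hclosed
  rintro _ ⟨t, ht, rfl⟩
  rw [Set.image_union]
  by_cases ha : ρ (t - a) = 0
  · exact Or.inr (hmem t c fun hc => ht (by rw [translateDiff, ha, hc, sub_self]))
  · exact Or.inl (hmem t a ha)

lemma integral_translateDiff_eq_zero (hρ : IsPeriodicBump T δ ρ) {q x y t : ℝ}
    (hqx : q + δ ≤ x - δ) (hxy : x ≤ y) (hyq : y + δ ≤ q + T - δ) (ht : |t - q| ≤ δ) :
    ∫ s in q..t, translateDiff ρ x y s = 0 := by
  rw [← intervalIntegral.integral_zero (a := q) (b := t)]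
  refine intervalIntegral.integral_congr fun s hs => ?_
  obtain ⟨h1, h2⟩ := abs_le.1 ((Set.abs_sub_left_of_mem_uIcc hs).trans ht)
  have hx : ρ (s - x) = 0 := hρ.comp_sub_eq_zero_of_left (by linarith) (by linarith)
  have hy : ρ (s - y) = 0 := hρ.comp_sub_eq_zero_of_left (by linarith) (by linarith)
  simp only [translateDiff, hx, hy, sub_self]

lemma integral_translateDiff_eq_integral (hρ : IsPeriodicBump T δ ρ) {q x y t : ℝ}
    (hqx : q ≤ x - δ) (hxt : x + δ ≤ t) (hty : t ≤ y - δ) (hyq : y + δ ≤ q + T) (hδ : 0 ≤ δ) :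
    ∫ s in q..t, translateDiff ρ x y s = ∫ s in (0 : ℝ)..T, ρ s := by
  rw [← hρ.integral_comp_sub_eq hqx hxt (by linarith)]
  refine intervalIntegral.integral_congr fun s hs => ?_
  rw [Set.uIcc_of_le (by linarith)] at hs
  have hy : ρ (s - y) = 0 := hρ.comp_sub_eq_zero_of_left (by linarith [hs.1]) (hs.2.trans hty)
  simp only [translateDiff, hy, sub_zero]

lemma translateDiff_mul_integral_eq (hρ : IsPeriodicBump T δ ρ) {q x p y t : ℝ}
    (hqx : q + δ ≤ x - δ) (hxp : x + δ ≤ p - δ) (hpy : p + δ ≤ y - δ)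
    (hyq : y + δ ≤ q + T - δ) (hδ : 0 ≤ δ) (ht : t ∈ Set.Icc (q - δ) (q - δ + T)) :
    translateDiff ρ p q t * ∫ s in q..t, translateDiff ρ x y s =
      ρ (t - p) * ∫ s in (0 : ℝ)..T, ρ s := by
  have hp_left : t ≤ p - δ → ρ (t - p) = 0 := hρ.comp_sub_eq_zero_of_left (by linarith [ht.1])
  rcases le_or_gt t (q + δ) with hq | hq
  · rw [hρ.integral_translateDiff_eq_zero hqx (by linarith) hyq
      (abs_le.2 ⟨by linarith [ht.1], by linarith⟩), hp_left (by linarith), mul_zero, zero_mul]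
  have hq0 : ρ (t - q) = 0 := hρ.comp_sub_eq_zero_of_right hq.le (by linarith [ht.2])
  rw [translateDiff, hq0, sub_zero]
  rcases le_or_gt t (p - δ) with hp | hp
  · rw [hp_left hp, zero_mul, zero_mul]
  rcases le_or_gt t (p + δ) with hp' | hp'
  · rw [hρ.integral_translateDiff_eq_integral (by linarith) (by linarith) (by linarith)
      (by linarith) hδ]
  · rw [hρ.comp_sub_eq_zero_of_right hp'.le (by linarith [ht.2]), zero_mul, zero_mul]

lemma integral_translateDiff_mul_integral (hρ : IsPeriodicBump T δ ρ) {q x p y : ℝ}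
    (hqx : q + δ ≤ x - δ) (hxp : x + δ ≤ p - δ) (hpy : p + δ ≤ y - δ)
    (hyq : y + δ ≤ q + T - δ) (hδ : 0 ≤ δ) :
    ∫ t in (0 : ℝ)..T, translateDiff ρ p q t * ∫ s in q..t, translateDiff ρ x y s =
      (∫ s in (0 : ℝ)..T, ρ s) ^ 2 := by
  have hper : Function.Periodic
      (fun t => translateDiff ρ p q t * ∫ s in q..t, translateDiff ρ x y s) T :=
    (periodic_translateDiff hρ.periodic p q).mul
      (periodic_integral_right (hρ.continuous_translateDiff x y)
        (periodic_translateDiff hρ.periodic x y) (hρ.integral_translateDiff x y) q)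
  calc ∫ t in (0 : ℝ)..T, translateDiff ρ p q t * ∫ s in q..t, translateDiff ρ x y s
      = ∫ t in q - δ..q - δ + T, translateDiff ρ p q t * ∫ s in q..t, translateDiff ρ x y s := by
        rw [hper.intervalIntegral_add_eq (q - δ) 0, zero_add]
    _ = ∫ t in q - δ..q - δ + T, ρ (t - p) * ∫ s in (0 : ℝ)..T, ρ s := by
        refine intervalIntegral.integral_congr fun t ht => ?_
        rw [Set.uIcc_of_le (by linarith)] at ht
        exact hρ.translateDiff_mul_integral_eq hqx hxp hpy hyq hδ ht
    _ = (∫ s in (0 : ℝ)..T, ρ s) ^ 2 := by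
        rw [intervalIntegral.integral_mul_const, hρ.integral_comp_sub_add_period, sq]

end IsPeriodicBump

section Circle

open scoped ContDiff Topology

lemma exists_pos_closedBall_subset_of_alternating {T q x p y : ℝ} (hqx : q < x) (hxp : x < p)
    (hpy : p < y) (hyq : y < q + T) {V W : Set ℝ} (hV : IsOpen V) (hW : IsOpen W) (hx : x ∈ V)
    (hy : y ∈ V) (hp : p ∈ W) (hq : q ∈ W) :
    ∃ δ > 0, (q + δ ≤ x - δ ∧ x + δ ≤ p - δ ∧ p + δ ≤ y - δ ∧ y + δ ≤ q + T - δ) ∧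
      Metric.closedBall x δ ∪ Metric.closedBall y δ ⊆ V ∧
      Metric.closedBall p δ ∪ Metric.closedBall q δ ⊆ W := by
  have hgap : ∀ u v : ℝ, u < v → ∀ᶠ δ in 𝓝[>] (0 : ℝ), u + δ < v - δ := fun u v huv =>
    nhdsWithin_le_nhds (ContinuousAt.eventually_lt (by fun_prop) (by fun_prop) (by simpa using huv))
  have hball : ∀ {U : Set ℝ} {c : ℝ}, IsOpen U → c ∈ U →
      ∀ᶠ δ in 𝓝[>] (0 : ℝ), Metric.closedBall c δ ⊆ U := fun hU hc =>
    nhdsWithin_le_nhds (eventually_closedBall_subset (hU.mem_nhds hc))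
  refine Filter.Eventually.exists (f := 𝓝[>] (0 : ℝ)) ?_
  filter_upwards [self_mem_nhdsWithin, hgap _ _ hqx, hgap _ _ hxp, hgap _ _ hpy, hgap _ _ hyq,
    hball hV hx, hball hV hy, hball hW hp, hball hW hq] with δ h0 h1 h2 h3 h4 hx hy hp hq
  exact ⟨h0, ⟨h1.le, h2.le, h3.le, h4.le⟩, Set.union_subset hx hy, Set.union_subset hp hq⟩

lemma exists_gevrey_pair_integral_mul_pos {T q x p y : ℝ} (hqx : q < x) (hxp : x < p)
    (hpy : p < y) (hyq : y < q + T) {V W : Set (AddCircle T)} (hV : IsOpen V) (hW : IsOpen W)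
    (hx : (x : AddCircle T) ∈ V) (hy : (y : AddCircle T) ∈ V) (hp : (p : AddCircle T) ∈ W)
    (hq : (q : AddCircle T) ∈ W) {σ : ℝ} (hσ : 1 < σ) :
    ∃ f v : ℝ → ℝ, ContDiff ℝ ∞ f ∧ ContDiff ℝ ∞ v ∧
      Function.Periodic f T ∧ Function.Periodic v T ∧
      HasGevreyBounds σ f ∧ HasGevreyBounds σ v ∧
      (∫ s in (0 : ℝ)..T, f s) = 0 ∧
      closure (((↑) : ℝ → AddCircle T) '' Function.support f) ⊆ W ∧
      closure (((↑) : ℝ → AddCircle T) '' Function.support (deriv v)) ⊆ V ∧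
      0 < ∫ s in (0 : ℝ)..T, f s * v s := by
  have hmk : Continuous ((↑) : ℝ → AddCircle T) := AddCircle.continuous_mk' T
  have hT : 0 < T := by linarith
  obtain ⟨δ, hδ, ⟨h1, h2, h3, h4⟩, hδV, hδW⟩ := exists_pos_closedBall_subset_of_alternating
    hqx hxp hpy hyq (hV.preimage hmk) (hW.preimage hmk) hx hy hp hq
  obtain ⟨ρ, hρ, hgev⟩ := exists_isPeriodicBump_hasGevreyBounds hT hδ (by linarith) hσ
  have hcont := hρ.continuous_translateDiff x y
  have hper := periodic_translateDiff hρ.periodic x y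
  have hmean := hρ.integral_translateDiff x y
  have hderiv : deriv (fun t => ∫ s in q..t, translateDiff ρ x y s) = translateDiff ρ x y :=
    funext (hcont.deriv_integral _ q)
  refine ⟨translateDiff ρ p q, fun t => ∫ s in q..t, translateDiff ρ x y s,
    contDiff_translateDiff hρ.contDiff p q,
    contDiff_integral_right (contDiff_translateDiff hρ.contDiff x y) q,
    periodic_translateDiff hρ.periodic p q, periodic_integral_right hcont hper hmean q,
    hgev.translateDiff hρ.contDiff p q,
    (hgev.translateDiff hρ.contDiff x y).integral_right (by linarith) hcont hT.ne' hper hmean q,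
    hρ.integral_translateDiff p q, ?_, ?_, ?_⟩
  · exact (hρ.closure_coe_image_support_translateDiff_subset hT p q).trans
      (Set.image_subset_iff.2 hδW)
  · rw [hderiv]
    exact (hρ.closure_coe_image_support_translateDiff_subset hT x y).trans
      (Set.image_subset_iff.2 hδV)
  · rw [hρ.integral_translateDiff_mul_integral h1 h2 h3 h4 hδ.le]
    exact pow_pos (hρ.integral_pos hT) 2

end Circle

section ConnectedComponents

variable {X : Type*} [TopologicalSpace X] {S : Set X}

lemma disjoint_connectedComponentIn_of_notMem {a b : X}
    (h : b ∉ connectedComponentIn S a) :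
    Disjoint (connectedComponentIn S a) (connectedComponentIn S b) := by
  refine Set.disjoint_left.2 fun z hza hzb => h ?_
  rw [connectedComponentIn_eq hza, ← connectedComponentIn_eq hzb]
  exact mem_connectedComponentIn (connectedComponentIn_nonempty_iff.1 ⟨z, hzb⟩)

lemma exists_disjoint_connectedComponentIn_of_not_isPreconnected (hS : ¬ IsPreconnected S) :
    ∃ a ∈ S, ∃ b ∈ S, Disjoint (connectedComponentIn S a) (connectedComponentIn S b) := by
  contrapose! hS
  refine isPreconnected_of_forall_pair fun a ha b hb => ⟨connectedComponentIn S a,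
    connectedComponentIn_subset S a, mem_connectedComponentIn ha, ?_,
    isPreconnected_connectedComponentIn⟩
  by_contra h
  exact hS a ha b hb (disjoint_connectedComponentIn_of_notMem h)

lemma exists_mem_Ioo_notMem_of_disjoint_connectedComponentIn {f : ℝ → X} (hf : Continuous f)
    {u v : ℝ} (huv : u ≤ v) (hu : f u ∈ S) (hv : f v ∈ S)
    (hdisj : Disjoint (connectedComponentIn S (f u)) (connectedComponentIn S (f v))) :
    ∃ p ∈ Set.Ioo u v, f p ∉ S := by
  by_contra! hIoo
  have hIcc : f '' Set.Icc u v ⊆ S := by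
    rw [← Set.Ioo_union_both huv, Set.image_union, Set.image_pair]
    exact Set.union_subset (Set.image_subset_iff.2 hIoo) (Set.pair_subset hu hv)
  have hsub : f '' Set.Icc u v ⊆ connectedComponentIn S (f u) :=
    (isPreconnected_Icc.image f hf.continuousOn).subset_connectedComponentIn
      (Set.mem_image_of_mem f (Set.left_mem_Icc.2 huv)) hIcc
  exact Set.disjoint_left.1 hdisj (hsub (Set.mem_image_of_mem f (Set.right_mem_Icc.2 huv)))
    (mem_connectedComponentIn hv)

lemma closure_connectedComponentIn_subset {U : Set X} (hSU : closure S ⊆ U) (a : X) :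
    closure (connectedComponentIn S a) ⊆ connectedComponentIn U a := by
  by_cases ha : a ∈ S
  · exact isPreconnected_connectedComponentIn.closure.subset_connectedComponentIn
      (subset_closure (mem_connectedComponentIn ha))
      ((closure_mono (connectedComponentIn_subset S a)).trans hSU)
  · simp only [connectedComponentIn_eq_empty ha, closure_empty, Set.empty_subset]

end ConnectedComponents

lemma exists_alternating_of_not_isPreconnected {T : ℝ} [Fact (0 < T)] {S : Set (AddCircle T)}
    (hS : ¬ IsPreconnected S) :
    ∃ q x p y : ℝ, q < x ∧ x < p ∧ p < y ∧ y < q + T ∧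
      (q : AddCircle T) ∉ S ∧ (x : AddCircle T) ∈ S ∧ (p : AddCircle T) ∉ S ∧
      (y : AddCircle T) ∈ S ∧
      Disjoint (connectedComponentIn S (x : AddCircle T)) (connectedComponentIn S y) := by
  have hmk : Continuous ((↑) : ℝ → AddCircle T) := AddCircle.continuous_mk' T
  obtain ⟨a, ha, b, hb, hdisj⟩ := exists_disjoint_connectedComponentIn_of_not_isPreconnected hS
  obtain ⟨x, rfl⟩ := QuotientAddGroup.mk_surjective a
  obtain ⟨y, ⟨hxy, hyx⟩, rfl⟩ : b ∈ ((↑) : ℝ → AddCircle T) '' Set.Ico x (x + T) :=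
    AddCircle.coe_image_Ico_eq T x ▸ Set.mem_univ b
  obtain ⟨p, ⟨hxp, hpy⟩, hp⟩ :=
    exists_mem_Ioo_notMem_of_disjoint_connectedComponentIn hmk hxy ha hb hdisj
  obtain ⟨q, ⟨hyq, hqx⟩, hq⟩ :=
    exists_mem_Ioo_notMem_of_disjoint_connectedComponentIn hmk hyx.le hb
      ((AddCircle.coe_add_period T x).symm ▸ ha) ((AddCircle.coe_add_period T x).symm ▸ hdisj.symm)
  refine ⟨q - T, x, p, y, by linarith, hxp, hpy, by linarith, ?_, ha, hp, hb, hdisj⟩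
  rwa [← AddCircle.coe_add_period T (q - T), sub_add_cancel]

theorem stmt8_general {T : ℝ} [Fact (0 < T)] {B : AddCircle T → ℝ} (hB : Continuous B) {r : ℝ}
    (hdisc : ¬ IsPreconnected {t | B t < r}) :
    ∃ r₀ < r,
      (∃ a ∈ {t | B t < r₀}, ∃ a' ∈ {t | B t < r₀},
        connectedComponentIn {t | B t < r₀} a ≠ connectedComponentIn {t | B t < r₀} a' ∧
        Disjoint (closure (connectedComponentIn {t | B t < r₀} a))
          (closure (connectedComponentIn {t | B t < r₀} a'))) ∧
      ∀ σ > (1 : ℝ), ∃ f₀ v₀ : ℝ → ℝ,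
        ContDiff ℝ (⊤ : ℕ∞) f₀ ∧ ContDiff ℝ (⊤ : ℕ∞) v₀ ∧
        Function.Periodic f₀ T ∧ Function.Periodic v₀ T ∧
        HasGevreyBounds σ f₀ ∧ HasGevreyBounds σ v₀ ∧
        (∫ s in (0 : ℝ)..T, f₀ s) = 0 ∧
        Disjoint (closure (((↑) : ℝ → AddCircle T) '' Function.support f₀)) {t | B t < r₀} ∧
        closure (((↑) : ℝ → AddCircle T) '' Function.support (deriv v₀)) ⊆ {t | B t < r₀} ∧
        0 < ∫ s in (0 : ℝ)..T, f₀ s * v₀ s := by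
  obtain ⟨q, x, p, y, hqx, hxp, hpy, hyq, hq, hx, hp, hy, hdisj⟩ :=
    exists_alternating_of_not_isPreconnected hdisc
  obtain ⟨r₀, hxy, hr⟩ : ∃ r₀, max (B x) (B y) < r₀ ∧ r₀ < r := exists_between (max_lt hx hy)
  obtain ⟨hx₀, hy₀⟩ := max_lt_iff.1 hxy
  have hclosure : closure {t | B t < r₀} ⊆ {t | B t < r} :=
    (closure_lt_subset_le hB continuous_const).trans fun t (ht : B t ≤ r₀) => ht.trans_lt hr
  have hdisj₀ := hdisj.mono (closure_connectedComponentIn_subset hclosure x)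
    (closure_connectedComponentIn_subset hclosure y)
  have hne : (connectedComponentIn {t | B t < r₀} x).Nonempty :=
    connectedComponentIn_nonempty_iff.2 hx₀
  refine ⟨r₀, hr, ⟨x, hx₀, y, hy₀, (hdisj₀.mono subset_closure subset_closure).ne hne.ne_empty,
    hdisj₀⟩, fun σ hσ => ?_⟩
  obtain ⟨f, v, hf, hv, hfper, hvper, hfgev, hvgev, hmean, hfsupp, hvsupp, hpos⟩ :=
    exists_gevrey_pair_integral_mul_pos hqx hxp hpy hyq (isOpen_lt hB continuous_const)
      (isOpen_lt continuous_const hB) hx₀ hy₀ (hr.trans_le (not_lt.1 hp))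
      (hr.trans_le (not_lt.1 hq)) hσ
  exact ⟨f, v, hf, hv, hfper, hvper, hfgev, hvgev, hmean,
    Set.disjoint_left.2 fun z hz (hz₀ : B z < r₀) => lt_asymm (hfsupp hz) hz₀, hvsupp, hpos⟩

/-- Lemma 4.7 (construction lemma, following Hounie–Cardoso): if a sublevel set
`Ω̃_r = {t ∈ 𝕋 : B(t) < r}` of the induced primitive `B` of `-b` is not connected, then
some `Ω̃_{r₀}`, `r₀ < r`, has two connected components with disjoint closures, and for
every `σ > 1` there exist Gevrey-`σ` periodic functions `f₀, v₀` with the stated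
support, mean and positivity properties. -/
theorem stmt8 (b : ℝ → ℝ) (hb : Continuous b)
    (hbper : Function.Periodic b (2 * Real.pi))
    (hb0 : (∫ s in (0:ℝ)..(2 * Real.pi), b s) = 0)
    (B : AddCircle (2 * Real.pi) → ℝ) (hB : Continuous B)
    (hBb : ∀ t : ℝ, B (t : AddCircle (2 * Real.pi)) = -∫ s in (0:ℝ)..t, b s)
    (r : ℝ)
    (hdisc : ¬ IsPreconnected {t : AddCircle (2 * Real.pi) | B t < r}) :
    ∃ r₀ < r,
      (∃ a ∈ {t : AddCircle (2 * Real.pi) | B t < r₀},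
        ∃ a' ∈ {t : AddCircle (2 * Real.pi) | B t < r₀},
          connectedComponentIn {t : AddCircle (2 * Real.pi) | B t < r₀} a ≠
            connectedComponentIn {t : AddCircle (2 * Real.pi) | B t < r₀} a' ∧
          Disjoint
            (closure (connectedComponentIn {t : AddCircle (2 * Real.pi) | B t < r₀} a))
            (closure (connectedComponentIn {t : AddCircle (2 * Real.pi) | B t < r₀} a'))) ∧
      ∀ σ > (1 : ℝ), ∃ f₀ v₀ : ℝ → ℝ,
        ContDiff ℝ (⊤ : ℕ∞) f₀ ∧ ContDiff ℝ (⊤ : ℕ∞) v₀ ∧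
        Function.Periodic f₀ (2 * Real.pi) ∧ Function.Periodic v₀ (2 * Real.pi) ∧
        (∃ C > (0 : ℝ), ∃ h > (0 : ℝ), ∀ k : ℕ, ∀ t : ℝ,
          |iteratedDeriv k f₀ t| ≤ C * h ^ k * ((Nat.factorial k : ℝ)) ^ σ) ∧
        (∃ C > (0 : ℝ), ∃ h > (0 : ℝ), ∀ k : ℕ, ∀ t : ℝ,
          |iteratedDeriv k v₀ t| ≤ C * h ^ k * ((Nat.factorial k : ℝ)) ^ σ) ∧
        (∫ s in (0:ℝ)..(2 * Real.pi), f₀ s) = 0 ∧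
        Disjoint
          (closure ((fun t : ℝ => (t : AddCircle (2 * Real.pi))) '' Function.support f₀))
          {t : AddCircle (2 * Real.pi) | B t < r₀} ∧
        closure ((fun t : ℝ => (t : AddCircle (2 * Real.pi))) '' Function.support (deriv v₀))
          ⊆ {t : AddCircle (2 * Real.pi) | B t < r₀} ∧
        (0 < ∫ s in (0:ℝ)..(2 * Real.pi), f₀ s * v₀ s) := by
  have : Fact (0 < 2 * Real.pi) := ⟨Real.two_pi_pos⟩
  exact stmt8_general hB hdisc
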